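/- Let 0 < p < q < ∞ and α > 1, and let f(z) = z. Then with r = √(p/q) one has (∫_𝔻 |rz|^q dA_α(z))^{1/q} ≤ (∫_𝔻 |z|^p dA_α(z))^{1/p}. -/

import Mathlib

open MeasureTheory Metric

/-- The weighted Bergman measure `dA_α` on the unit disk:
density `((α-1)/π)(1-|z|²)^(α-2)` with respect to Lebesgue area measure. -/
noncomputable def bergmanMeasure (α : ℝ) : Measure ℂ :=
  (volume.restrict (ball (0 : ℂ) 1)).withDensity
    (fun z => ENNReal.ofReal ((α - 1) / Real.pi * (1 - ‖z‖ ^ 2) ^ (α - 2)))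

lemma aux_beta (u v : ℝ) (hu : 0 < u) (hv : 0 < v) :
    ∫ x in Set.Ioo (0:ℝ) 1, x ^ (u - 1) * (1 - x) ^ (v - 1) = ProbabilityTheory.beta u v := by
  rw [ProbabilityTheory.beta_eq_betaIntegralReal u v hu hv,
      Complex.betaIntegral, intervalIntegral.integral_of_le (by norm_num),
      ← integral_Ioc_eq_integral_Ioo, ← RCLike.re_to_complex, ← integral_re]
  · refine setIntegral_congr_fun measurableSet_Ioc fun x ⟨hx1, hx₂⟩ ↦ ?_
    norm_cast
    rw [← Complex.ofReal_cpow, ← Complex.ofReal_cpow, RCLike.re_to_complex,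
        Complex.re_mul_ofReal, Complex.ofReal_re]
    all_goals linarith
  convert! Complex.betaIntegral_convergent (u := u) (v := v) (by simpa) (by simpa)
  rw [intervalIntegrable_iff_integrableOn_Ioc_of_le (by simp), IntegrableOn]

lemma aux_moment (s α : ℝ) (hs : 0 < s) (hα : 1 < α) :
    ∫ z, ‖z‖ ^ s ∂(bergmanMeasure α) =
      Real.Gamma (s / 2 + 1) * Real.Gamma α / Real.Gamma (s / 2 + α) := by
  unfold bergmanMeasure
  rw [integral_withDensity_eq_integral_toReal_smul (by fun_prop) (by simp)]
  set F : ℝ → ℝ := fun r => if r < 1 then ((α - 1) / Real.pi * (1 - r ^ 2) ^ (α - 2)) * r ^ s else 0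
    with hF
  set G : ℝ → ℝ := fun t => (Set.Ioo (0:ℝ) 1).indicator
    (fun t => (α - 1) * (t ^ (s / 2 + 1 - 1) * (1 - t) ^ (α - 1 - 1))) t with hG
  have h1 : ∫ z in ball (0:ℂ) 1,
      (ENNReal.ofReal ((α - 1) / Real.pi * (1 - ‖z‖ ^ 2) ^ (α - 2))).toReal • ‖z‖ ^ s
      = ∫ z : ℂ, F ‖z‖ := by
    rw [← integral_indicator measurableSet_ball]
    congr 1
    ext z
    by_cases hz : ‖z‖ < 1
    · have h0 : 0 ≤ (α - 1) / Real.pi * (1 - ‖z‖ ^ 2) ^ (α - 2) := by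
        have : 0 ≤ 1 - ‖z‖ ^ 2 := by nlinarith [norm_nonneg z]
        have := Real.pi_pos
        have : 0 ≤ α - 1 := by linarith
        positivity
      rw [Set.indicator_of_mem (by simpa using hz), ENNReal.toReal_ofReal h0]
      simp [hF, hz]
    · rw [Set.indicator_of_notMem (by simpa using hz)]
      simp [hF, hz]
  rw [h1, integral_fun_norm_addHaar]
  have h2 : (volume : Measure ℂ).real (ball 0 1) = Real.pi := by
    simp [Measure.real, Complex.volume_ball]
  rw [h2, Complex.finrank_real_complex]
  have h3 : ∫ y in Set.Ioi (0:ℝ), y ^ (2 - 1) • F y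
      = (2 * Real.pi)⁻¹ * ∫ y in Set.Ioi (0:ℝ), (2 * y ^ ((2:ℝ) - 1)) • G (y ^ (2:ℝ)) := by
    rw [← integral_const_mul]
    refine setIntegral_congr_fun measurableSet_Ioi fun y hy ↦ ?_
    have hy : 0 < y := hy
    have e1 : (2:ℝ) - 1 = 1 := by norm_num
    have e2 : (y ^ 2) ^ (s / 2) = y ^ s := by
      rw [← Real.rpow_natCast, ← Real.rpow_mul hy.le]; congr 1; push_cast; ring
    have e3 : α - 1 - 1 = α - 2 := by ring
    by_cases h : y < 1
    · have : y ^ 2 < 1 := by nlinarith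
      have hm : y ^ 2 ∈ Set.Ioo (0:ℝ) 1 := ⟨by positivity, this⟩
      simp only [hF, hG, h, if_true, Real.rpow_two, Set.indicator_of_mem hm, e1, e3,
        add_sub_cancel_right, e2, Real.rpow_one, smul_eq_mul]
      have := Real.pi_pos
      norm_num
      field_simp
    · have hm : y ^ 2 ∉ Set.Ioo (0:ℝ) 1 := fun hm => by nlinarith [hm.2]
      simp only [hF, hG, h, if_false, Real.rpow_two, Set.indicator_of_notMem hm]
      simp
  rw [h3, integral_comp_rpow_Ioi_of_pos (g := G) (by norm_num : (0:ℝ) < 2)]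
  have h4 : ∫ y in Set.Ioi (0:ℝ), G y
      = (α - 1) * ProbabilityTheory.beta (s / 2 + 1) (α - 1) := by
    rw [hG, setIntegral_indicator measurableSet_Ioo,
      Set.inter_eq_right.2 Set.Ioo_subset_Ioi_self, integral_const_mul,
      aux_beta _ _ (by positivity) (by linarith)]
  rw [h4, ProbabilityTheory.beta]
  have h5 : Real.Gamma α = (α - 1) * Real.Gamma (α - 1) := by
    rw [← Real.Gamma_add_one (by linarith)]; congr 1; ring
  have h6 : s / 2 + 1 + (α - 1) = s / 2 + α := by ring
  rw [h5, h6]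
  have := Real.pi_pos
  simp only [nsmul_eq_mul, smul_eq_mul]
  push_cast
  field_simp

open Real in
lemma aux_T (b l n : ℝ) (hb : 0 < b) (hl : 0 < l) (hl1 : l < 1) (hn : 0 ≤ n) :
    l * ((b + n) * (log (b + n + 1) - log (b + n))) + (1 - l) * (n * (log (n + 1) - log n))
      ≤ (l * b + n) * (log (l * b + n + 1) - log (l * b + n)) := by
  have hlb : 0 < l * b := by positivity
  have hy : 0 < l * b + n := by positivity
  have hy1 : 0 < b + n := by positivity
  rcases hn.eq_or_lt with h | h
  · subst h
    simp only [add_zero, zero_mul, mul_zero]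
    rw [← mul_assoc]
    refine mul_le_mul_of_nonneg_left ?_ hlb.le
    rw [← log_div (by positivity) (by positivity), ← log_div (by positivity) (by positivity)]
    apply log_le_log (by positivity)
    rw [div_le_div_iff₀ hb hlb]
    nlinarith
  · rw [← log_div (by positivity) (by positivity), ← log_div (by positivity) (by positivity),
      ← log_div (by positivity) (by positivity)]
    have hl' : 0 < 1 - l := by linarith
    have := strictConcaveOn_log_Ioi.concaveOn.2
      (show (b + n + 1) / (b + n) ∈ Set.Ioi (0:ℝ) from Set.mem_Ioi.2 (by positivity))
      (show (n + 1) / n ∈ Set.Ioi (0:ℝ) from Set.mem_Ioi.2 (by positivity))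
      (show 0 ≤ l * (b + n) / (l * b + n) by positivity)
      (show 0 ≤ (1 - l) * n / (l * b + n) by positivity) (by field_simp; ring)
    simp only [smul_eq_mul] at this
    have e : l * (b + n) / (l * b + n) * ((b + n + 1) / (b + n))
        + (1 - l) * n / (l * b + n) * ((n + 1) / n) = (l * b + n + 1) / (l * b + n) := by
      field_simp; ring
    rw [e] at this
    have := mul_le_mul_of_nonneg_left this hy.le
    refine le_trans (le_of_eq ?_) this
    field_simp

open Real in
lemma aux_sum (b l : ℝ) (hb : 0 < b) (hl : 0 < l) (hl1 : l < 1) (n : ℕ) :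
    ∑ m ∈ Finset.range n, (log (l * b + (m + 1)) - l * log (b + (m + 1)) - (1 - l) * log (m + 1))
      + l * b * log (l * b) - l * (b * log b) ≤
    (l * b + n) * log (l * b + n) - l * ((b + n) * log (b + n)) - (1 - l) * (n * log n) := by
  induction n with
  | zero => simp
  | succ n ih =>
    rw [Finset.sum_range_succ]
    have := aux_T b l n hb hl hl1 (Nat.cast_nonneg n)
    push_cast
    simp only [← add_assoc] at *
    nlinarith

open Real in
lemma aux_Gamma (b l : ℝ) (hb : 0 < b) (hl : 0 < l) (hl1 : l < 1) :
    l * log (Gamma (b + 1)) + l * b * log l ≤ log (Gamma (l * b + 1)) := by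
  have hlb : 0 < l * b := by positivity
  rw [Gamma_add_one hb.ne', Gamma_add_one hlb.ne', log_mul hb.ne' (Gamma_pos_of_pos hb).ne',
    log_mul hlb.ne' (Gamma_pos_of_pos hlb).ne']
  have t1 := BohrMollerup.tendsto_log_gamma hb
  have t2 := BohrMollerup.tendsto_log_gamma hlb
  refine le_of_tendsto_of_tendsto' ((t1.const_add (log b)).const_mul l |>.add_const _)
    (t2.const_add _) fun n => ?_
  unfold BohrMollerup.logGammaSeq
  have hs := aux_sum b l hb hl hl1 n
  have hc := convexOn_mul_log.2 (x := b + n) (y := n) (Set.mem_Ici.2 (by positivity))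
    (Set.mem_Ici.2 (by positivity)) hl.le (sub_nonneg.2 hl1.le) (by ring)
  simp only [smul_eq_mul] at hc
  rw [show l * (b + n) + (1 - l) * n = l * b + n by ring] at hc
  rw [Finset.sum_range_succ' _ n, Finset.sum_range_succ' _ n]
  simp only [Finset.sum_sub_distrib, ← Finset.mul_sum] at hs
  have hf : ∑ m ∈ Finset.range n, log ((m:ℝ) + 1) = log (n.factorial : ℝ) := by
    rw [← Finset.prod_range_add_one_eq_factorial]
    push_cast
    rw [log_prod]
    intro i _
    positivity
  rw [hf, log_mul hl.ne' hb.ne'] at hs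
  push_cast
  simp only [add_zero]
  rw [log_mul hl.ne' hb.ne']
  nlinarith

open Real in
lemma aux_Gamma2 (b l α : ℝ) (hb : 0 < b) (hl : 0 < l) (hl1 : l < 1) (hα : 1 < α) :
    log (Gamma (l * b + α)) ≤ l * log (Gamma (b + α)) + (1 - l) * log (Gamma α) := by
  have hc := convexOn_log_Gamma.2 (x := b + α) (y := α) (Set.mem_Ioi.2 (by positivity))
    (Set.mem_Ioi.2 (by positivity)) hl.le (sub_nonneg.2 hl1.le) (by ring)
  simp only [smul_eq_mul, Function.comp] at hc
  rwa [show l * (b + α) + (1 - l) * α = l * b + α by ring] at hc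

theorem hypercontractivity_for_identity_function
    (p q α : ℝ) (hp : 0 < p) (hpq : p < q) (hα : 1 < α) :
    (∫ z, ‖(Real.sqrt (p / q) : ℂ) * z‖ ^ q ∂(bergmanMeasure α)) ^ (1 / q) ≤
      (∫ z, ‖z‖ ^ p ∂(bergmanMeasure α)) ^ (1 / p) := by
  have hq : 0 < q := hp.trans hpq
  have hr : 0 < p / q := by positivity
  have hsr : 0 < √(p / q) := Real.sqrt_pos.2 hr
  have h1 : ∀ z : ℂ, ‖(Real.sqrt (p / q) : ℂ) * z‖ ^ q = √(p / q) ^ q * ‖z‖ ^ q := by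
    intro z
    rw [norm_mul, Complex.norm_real, Real.norm_of_nonneg hsr.le,
      Real.mul_rpow hsr.le (norm_nonneg _)]
  simp_rw [h1]
  rw [integral_const_mul, aux_moment q α hq hα, aux_moment p α hp hα]
  have k1 := aux_Gamma (q / 2) (p / q) (by positivity) hr ((div_lt_one hq).2 hpq)
  have k2 := aux_Gamma2 (q / 2) (p / q) α (by positivity) hr ((div_lt_one hq).2 hpq) hα
  rw [show p / q * (q / 2) = p / 2 by field_simp] at k1 k2
  have g1 := Real.Gamma_pos_of_pos (show 0 < q / 2 + 1 by positivity)
  have g2 := Real.Gamma_pos_of_pos (show 0 < q / 2 + α by positivity)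
  have g3 := Real.Gamma_pos_of_pos (show 0 < p / 2 + 1 by positivity)
  have g4 := Real.Gamma_pos_of_pos (show 0 < p / 2 + α by positivity)
  have g5 := Real.Gamma_pos_of_pos (show 0 < α by positivity)
  rw [← Real.log_le_log_iff (by positivity) (by positivity), Real.log_rpow (by positivity),
    Real.log_rpow (by positivity), Real.log_mul (by positivity) (by positivity),
    Real.log_rpow hsr, Real.log_sqrt hr.le, Real.log_div (mul_pos g1 g5).ne' g2.ne',
    Real.log_div (mul_pos g3 g5).ne' g4.ne', Real.log_mul (by positivity) (by positivity),
    Real.log_mul (by positivity) (by positivity)]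
  have k3 := mul_le_mul_of_nonneg_left (add_le_add k1 k2) (by positivity : 0 ≤ 1 / p)
  have e : p / q = p * (1 / q) := by ring
  generalize Real.log (p / q) = L at *
  generalize Real.log (Real.Gamma (q / 2 + 1)) = A at *
  generalize Real.log (Real.Gamma (q / 2 + α)) = B at *
  generalize Real.log (Real.Gamma (p / 2 + 1)) = C at *
  generalize Real.log (Real.Gamma (p / 2 + α)) = D at *
  generalize Real.log (Real.Gamma α) = E at *
  rw [← sub_nonneg] at k3 ⊢
  refine le_of_le_of_eq k3 ?_
  field_simp
  ring
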